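/- arXiv:1907.05016 — 4 statements merged into one kernel-verified Lean document; each statement's English description precedes it below -/
import Mathlib

section
/- For every real p ∈ (0,1) and every positive integer m, setting q = 1 - (1-p)^m, if q ≤ 1/6 then m·p·(1-p)^{m-1} > q(1-q). -/
section LinearOrderedRing

variable {R : Type*} [Ring R] [LinearOrder R] [IsStrictOrderedRing R] {p : R}

theorem one_sub_one_sub_pow_le_mul (hp : p ≤ 2) (m : ℕ) : 1 - (1 - p) ^ m ≤ m * p := by
  have bernoulli : 1 + m * (-p) ≤ (1 + -p) ^ m := one_add_mul_le_pow (neg_le_neg hp) m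
  rw [mul_neg, ← sub_eq_add_neg, ← sub_eq_add_neg] at bernoulli
  exact sub_le_comm.mp bernoulli

theorem one_sub_one_sub_pow_mul_one_sub_lt_mul (hp0 : p ≠ 0) (hp1 : p < 1) {m : ℕ} (hm : 0 < m) :
    (1 - (1 - p) ^ m) * (1 - p) < m * p := by
  have hmp : 0 < (m : R) * p ^ 2 := mul_pos (Nat.cast_pos.mpr hm) (sq_pos_of_ne_zero hp0)
  calc (1 - (1 - p) ^ m) * (1 - p)
      ≤ m * p * (1 - p) :=
        mul_le_mul_of_nonneg_right (one_sub_one_sub_pow_le_mul (hp1.le.trans one_le_two) m)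
          (sub_nonneg.mpr hp1.le)
    _ = m * p - m * p ^ 2 := by rw [mul_one_sub, sq, mul_assoc]
    _ < m * p := sub_lt_self _ hmp

theorem stmt_1_general (hp0 : p ≠ 0) (hp1 : p < 1) {m : ℕ} (hm : 0 < m)
    {q : R} (hq : q = 1 - (1 - p) ^ m) :
    q * (1 - q) < m * p * (1 - p) ^ (m - 1) := by
  have one_sub_q : 1 - q = (1 - p) * (1 - p) ^ (m - 1) := by
    rw [hq, sub_sub_cancel, mul_pow_sub_one hm.ne']
  calc q * (1 - q)
      = (1 - (1 - p) ^ m) * (1 - p) * (1 - p) ^ (m - 1) := by rw [one_sub_q, hq, mul_assoc]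
    _ < m * p * (1 - p) ^ (m - 1) :=
        mul_lt_mul_of_pos_right (one_sub_one_sub_pow_mul_one_sub_lt_mul hp0 hp1 hm)
          (pow_pos (sub_pos.mpr hp1) _)

end LinearOrderedRing

/-- For every real `p ∈ (0,1)` and every positive integer `m`,
setting `q = 1 - (1-p)^m`, if `q ≤ 1/6` then `m·p·(1-p)^(m-1) > q(1-q)`. -/
theorem stmt_1 (p : ℝ) (hp0 : 0 < p) (hp1 : p < 1) (m : ℕ) (hm : 0 < m)
    (q : ℝ) (hq : q = 1 - (1 - p) ^ m) (hq6 : q ≤ 1 / 6) :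
    (m : ℝ) * p * (1 - p) ^ (m - 1) > q * (1 - q) :=
  stmt_1_general hp0.ne' hp1 hm hq
end

section
/- Let n > t ≥ 0 be integers with β = t/n < 1/2, let ξ = (1-2β)/(1-β), let p ∈ (0,1), and let q = 1 - (1-p)^{n-t}. If q ≤ ξ/6, then p·t < q. -/
/-!
With `m = n - t` honest miners, `ξ = 1 - t / m`, so `q ≤ ξ` says `t ≤ m * (1 - p) ^ m`. Since
`(1 - p) ^ m ≤ exp (-p * m)` and `1 + p * m < exp (p * m)`, we have `(1 + p * m) * (1 - p) ^ m < 1`,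
that is, `p * m * (1 - p) ^ m < q`. Hence `p * t ≤ p * m * (1 - p) ^ m < q`.
-/

open Real

lemma one_sub_rpow_le_exp_neg_mul {p x : ℝ} (hp : p ≤ 1) (hx : 0 ≤ x) :
    (1 - p) ^ x ≤ exp (-(p * x)) :=
  calc (1 - p) ^ x ≤ exp (-p) ^ x := rpow_le_rpow (sub_nonneg.2 hp) (one_sub_le_exp_neg p) hx
    _ = exp (-(p * x)) := by rw [← exp_mul, neg_mul]

lemma mul_mul_one_sub_rpow_lt_one_sub_one_sub_rpow {p x : ℝ} (hp₀ : 0 < p) (hp₁ : p ≤ 1)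
    (hx : 0 < x) : p * x * (1 - p) ^ x < 1 - (1 - p) ^ x := by
  have hpx : 0 < p * x := mul_pos hp₀ hx
  have h : (p * x + 1) * (1 - p) ^ x < 1 :=
    calc (p * x + 1) * (1 - p) ^ x ≤ (p * x + 1) * exp (-(p * x)) := by
          gcongr
          exact one_sub_rpow_le_exp_neg_mul hp₁ hx.le
      _ < exp (p * x) * exp (-(p * x)) := by
          gcongr
          exact add_one_lt_exp hpx.ne'
      _ = 1 := by rw [← exp_add, add_neg_cancel, exp_zero]
  linarith

lemma one_sub_two_mul_div_div_one_sub_div {K : Type*} [Field K] {n t : K} (hn : n ≠ 0)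
    (hnt : n - t ≠ 0) : (1 - 2 * (t / n)) / (1 - t / n) = 1 - t / (n - t) := by
  field_simp
  ring

theorem stmt_2_general {n t p : ℝ} (ht : 0 ≤ t) (htn : t < n) (hp₀ : 0 < p) (hp₁ : p ≤ 1)
    (hq : 1 - (1 - p) ^ (n - t) ≤ (1 - 2 * (t / n)) / (1 - t / n)) :
    p * t < 1 - (1 - p) ^ (n - t) := by
  have hm : 0 < n - t := sub_pos.2 htn
  rw [one_sub_two_mul_div_div_one_sub_div (ht.trans_lt htn).ne' hm.ne', sub_le_sub_iff_left,
    div_le_iff₀' hm] at hq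
  calc p * t ≤ p * ((n - t) * (1 - p) ^ (n - t)) := by gcongr
    _ = p * (n - t) * (1 - p) ^ (n - t) := (mul_assoc ..).symm
    _ < 1 - (1 - p) ^ (n - t) := mul_mul_one_sub_rpow_lt_one_sub_one_sub_rpow hp₀ hp₁ hm

/-- Let `n > t ≥ 0` be integers with `β = t/n < 1/2`, let
`ξ = (1-2β)/(1-β)`, let `p ∈ (0,1)`, and let `q = 1 - (1-p)^(n-t)`.
If `q ≤ ξ/6`, then `p·t < q`. -/
theorem stmt_2 (n t : ℕ) (hnt : t < n)
    (β : ℝ) (hβ : β = (t : ℝ) / n) (hβhalf : β < 1 / 2)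
    (ξ : ℝ) (hξ : ξ = (1 - 2 * β) / (1 - β))
    (p : ℝ) (hp0 : 0 < p) (hp1 : p < 1)
    (q : ℝ) (hq : q = 1 - (1 - p) ^ (n - t)) (hq6 : q ≤ ξ / 6) :
    p * t < q := by
  have hξ₀ : 0 ≤ ξ := hξ ▸ div_nonneg (by linarith) (by linarith)
  have hqξ : q ≤ ξ := hq6.trans (div_le_self hξ₀ (by norm_num))
  rw [← rpow_natCast, Nat.cast_sub hnt.le] at hq
  subst hβ hξ hq
  exact stmt_2_general t.cast_nonneg (Nat.cast_lt.2 hnt) hp0 hp1.le hqξ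
end

section
/- Let n > t ≥ 0 be integers with β = t/n < 1/2, ξ = (1-2β)/(1-β), let T ≥ 1 be an integer, let p ∈ (0,1), and let q = 1 - (1-p)^{n-t}. If q ≤ ξ/(20T), then p·t < q(1 - Tq) ≤ (n-t)p(1-p)^{n-t-1}(1-q)^{T-1}. -/
/-!
Write `m = n - t`. Bernoulli's inequality and its reciprocal form `(1 + m p) (1 - p) ^ m ≤ 1` give
`m p (1 - q) ≤ q ≤ m p`. Since `t = m (1 - ξ)` and `2 T q ≤ ξ`, the adversarial rate satisfies
`p t ≤ m p (1 - 2 T q) < m p (1 - q) (1 - T q) ≤ q (1 - T q)`. For the other bound,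
`1 - T q ≤ (1 - q) ^ T`, and one of the `T` factors `1 - q = (1 - p) ^ m` is at most
`(1 - p) ^ (m - 1)`.
-/

section OrderedRing

variable {R : Type*} [CommRing R] [LinearOrder R] [IsStrictOrderedRing R] {p q : R} {m : ℕ}

theorem one_sub_mul_le_one_sub_pow (hp : p ≤ 2) (m : ℕ) : 1 - m * p ≤ (1 - p) ^ m := by
  simpa only [mul_neg, ← sub_eq_add_neg] using one_add_mul_le_pow (neg_le_neg hp) m

theorem one_add_mul_mul_one_sub_pow_le_one (hp : p ≤ 1) (m : ℕ) :
    (1 + m * p) * (1 - p) ^ m ≤ 1 := by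
  induction m with
  | zero => simp
  | succ m ih =>
    have : 0 ≤ (1 - p) ^ m := pow_nonneg (sub_nonneg.2 hp) m
    calc (1 + (m + 1 : ℕ) * p) * (1 - p) ^ (m + 1)
        = (1 + m * p) * (1 - p) ^ m - (m + 1) * p ^ 2 * (1 - p) ^ m := by push_cast; ring
      _ ≤ (1 + m * p) * (1 - p) ^ m := sub_le_self _ (by positivity)
      _ ≤ 1 := ih

theorem success_prob_le_mul (hp : p ≤ 2) (hq : q = 1 - (1 - p) ^ m) : q ≤ m * p := by
  linarith [one_sub_mul_le_one_sub_pow hp m]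

theorem mul_mul_one_sub_success_prob_le (hp : p ≤ 1) (hq : q = 1 - (1 - p) ^ m) :
    m * p * (1 - q) ≤ q := by
  have h := one_add_mul_mul_one_sub_pow_le_one hp m
  rw [show (1 - p) ^ m = 1 - q by rw [hq, sub_sub_cancel]] at h
  linarith

theorem success_prob_nonneg (hp0 : 0 ≤ p) (hp1 : p ≤ 1) (hq : q = 1 - (1 - p) ^ m) : 0 ≤ q :=
  hq ▸ sub_nonneg.2 (pow_le_one₀ (sub_nonneg.2 hp1) (sub_le_self 1 hp0))

theorem success_prob_pos (hp0 : 0 < p) (hp1 : p ≤ 1) (hm : m ≠ 0) (hq : q = 1 - (1 - p) ^ m) :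
    0 < q :=
  hq ▸ sub_pos.2 (pow_lt_one₀ (sub_nonneg.2 hp1) (sub_lt_self 1 hp0) hm)

theorem success_prob_le_one (hp : p ≤ 1) (hq : q = 1 - (1 - p) ^ m) : q ≤ 1 :=
  hq ▸ sub_le_self 1 (pow_nonneg (sub_nonneg.2 hp) m)

theorem mul_one_sub_two_mul_lt_success_prob_mul (hp0 : 0 < p) (hp1 : p ≤ 1) (hm : m ≠ 0)
    (hq : q = 1 - (1 - p) ^ m) {x : R} (hx : q ≤ x) :
    m * p * (1 - 2 * x) < q * (1 - x) := by
  have q_pos : 0 < q := success_prob_pos hp0 hp1 hm hq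
  have x_pos : 0 < x := q_pos.trans_le hx
  have q_le : q ≤ m * p := success_prob_le_mul (hp1.trans one_le_two) hq
  have mp_pos : 0 < m * p := q_pos.trans_le q_le
  rcases le_total x 1 with x_le_one | one_le_x
  · have key : 1 - 2 * x < (1 - q) * (1 - x) := by linarith [mul_pos q_pos x_pos]
    calc m * p * (1 - 2 * x) < m * p * ((1 - q) * (1 - x)) := mul_lt_mul_of_pos_left key mp_pos
      _ = m * p * (1 - q) * (1 - x) := (mul_assoc _ _ _).symm
      _ ≤ q * (1 - x) := mul_le_mul_of_nonneg_right
          (mul_mul_one_sub_success_prob_le hp1 hq) (sub_nonneg.2 x_le_one)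
  · calc m * p * (1 - 2 * x) < m * p * (1 - x) := mul_lt_mul_of_pos_left (by linarith) mp_pos
      _ ≤ q * (1 - x) := mul_le_mul_of_nonpos_right q_le (sub_nonpos.2 one_le_x)

theorem success_prob_mul_le_isolated_prob (hp0 : 0 ≤ p) (hp1 : p ≤ 1)
    (hq : q = 1 - (1 - p) ^ m) {T : ℕ} (hT : T ≠ 0) :
    q * (1 - T * q) ≤ m * p * (1 - p) ^ (m - 1) * (1 - q) ^ (T - 1) := by
  have q_nonneg : 0 ≤ q := success_prob_nonneg hp0 hp1 hq
  have q_le_one : q ≤ 1 := success_prob_le_one hp1 hq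
  have : 0 ≤ 1 - q := sub_nonneg.2 q_le_one
  have one_sub_q_le : 1 - q ≤ (1 - p) ^ (m - 1) := by
    rw [hq, sub_sub_cancel]
    exact pow_le_pow_of_le_one (sub_nonneg.2 hp1) (sub_le_self 1 hp0) (m.sub_le 1)
  calc q * (1 - T * q) ≤ q * (1 - q) ^ T := by
        gcongr
        exact one_sub_mul_le_one_sub_pow (q_le_one.trans one_le_two) T
    _ ≤ m * p * (1 - q) ^ T := by
        gcongr
        exact success_prob_le_mul (hp1.trans one_le_two) hq
    _ = m * p * (1 - q) * (1 - q) ^ (T - 1) := by rw [mul_assoc _ (1 - q), mul_pow_sub_one hT]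
    _ ≤ m * p * (1 - p) ^ (m - 1) * (1 - q) ^ (T - 1) := by gcongr

end OrderedRing

theorem sub_mul_one_sub_advantage {K : Type*} [Field K] {n t : K} (hn : n ≠ 0) (hnt : n ≠ t) :
    (n - t) * (1 - (1 - 2 * (t / n)) / (1 - t / n)) = t := by
  have sub_ne : n - t ≠ 0 := sub_ne_zero.2 hnt
  have one_sub_eq : 1 - t / n = (n - t) / n := by field_simp
  rw [one_sub_eq]
  field_simp
  ring

theorem stmt_11_general (n t : ℕ) (hnt : t < n)
    (β : ℝ) (hβ : β = (t : ℝ) / n)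
    (ξ : ℝ) (hξ : ξ = (1 - 2 * β) / (1 - β))
    (T : ℕ) (hT : 1 ≤ T)
    (p : ℝ) (hp0 : 0 < p) (hp1 : p ≤ 1)
    (q : ℝ) (hq : q = 1 - (1 - p) ^ (n - t)) (hq2T : q ≤ ξ / (2 * T)) :
    p * t < q * (1 - T * q) ∧
    q * (1 - T * q) ≤ ((n : ℝ) - t) * p * (1 - p) ^ (n - t - 1) * (1 - q) ^ (T - 1) := by
  have hT' : (1 : ℝ) ≤ T := by exact_mod_cast hT
  have hnt' : (t : ℝ) < n := by exact_mod_cast hnt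
  have hm : n - t ≠ 0 := (Nat.sub_pos_of_lt hnt).ne'
  have t_eq : ((n : ℝ) - t) * (1 - ξ) = t := by
    rw [hξ, hβ]
    exact sub_mul_one_sub_advantage (t.cast_nonneg.trans_lt hnt').ne' hnt'.ne'
  have two_mul_le : 2 * (T * q) ≤ ξ := by
    rw [le_div_iff₀ (by positivity)] at hq2T
    linarith
  have q_le : q ≤ T * q := le_mul_of_one_le_left (success_prob_nonneg hp0.le hp1 hq) hT'
  rw [← Nat.cast_sub hnt.le] at t_eq ⊢
  refine ⟨?_, success_prob_mul_le_isolated_prob hp0.le hp1 hq (Nat.one_le_iff_ne_zero.1 hT)⟩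
  calc p * t = (n - t : ℕ) * p * (1 - ξ) := by rw [mul_right_comm, t_eq, mul_comm]
    _ ≤ (n - t : ℕ) * p * (1 - 2 * (T * q)) := by gcongr
    _ < q * (1 - T * q) := mul_one_sub_two_mul_lt_success_prob_mul hp0 hp1 hm hq q_le

/-- Let `n > t ≥ 0` be integers with `β = t/n < 1/2`,
`ξ = (1-2β)/(1-β)`, let `T ≥ 1` be an integer, let `p ∈ (0,1)`, and let
`q = 1 - (1-p)^(n-t)`.  If `q ≤ ξ/(20T)`, then
`p·t < q(1 - Tq) ≤ (n-t)p(1-p)^(n-t-1)(1-q)^(T-1)`. -/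
theorem stmt_11 (n t : ℕ) (hnt : t < n)
    (β : ℝ) (hβ : β = (t : ℝ) / n) (hβhalf : β < 1 / 2)
    (ξ : ℝ) (hξ : ξ = (1 - 2 * β) / (1 - β))
    (T : ℕ) (hT : 1 ≤ T)
    (p : ℝ) (hp0 : 0 < p) (hp1 : p < 1)
    (q : ℝ) (hq : q = 1 - (1 - p) ^ (n - t)) (hq20T : q ≤ ξ / (20 * T)) :
    p * t < q * (1 - T * q) ∧
    q * (1 - T * q) ≤ ((n : ℝ) - t) * p * (1 - p) ^ (n - t - 1) * (1 - q) ^ (T - 1) := by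
  have ξ_nonneg : 0 ≤ ξ := hξ ▸ div_nonneg (by linarith) (by linarith)
  exact stmt_11_general n t hnt β hβ ξ hξ T hT p hp0 hp1.le q hq
    (hq20T.trans (by gcongr; norm_num))
end

section
/- Let β ∈ [0, 1/2), ξ = (1-2β)/(1-β), let T ≥ 1 be an integer, let q ∈ (0,1) with q ≤ ξ/(20T), and let N be a real number with N > 2/q. Suppose real numbers x', y', z, z⁺, z± satisfy: x' ≥ (1-ξ/20)·q(1-q)^T·N; y' ≥ (1-ξ/20)·q·(1-(2T-1)q)·N; z ≤ (1-ξ)·q/(1-q)·N + (ξ/20)·q·N; z⁺ ≤ (1-ξ)·q/(1-q)·(N+T) + (ξ/20)·q(1-q)^T·(N+T); and z± ≤ (1-2ξ/3)·q·(N+2T). Then: (i) y' > (1-ξ/3)qN; (ii) z < (1-2ξ/3)qN; (iii) z⁺ < (1-ξ/2)·x'; and (iv) z± < y'. -/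
/-!
Every factor in sight has the form `1 - c ξ`, and such losses simply add up, since
`(1 - a) (1 - b) ≥ 1 - (a + b)`. The hypotheses give `q T ≤ ξ / 20`, so double isolation costs
`y'` at most `ξ / 10`, and by Bernoulli's inequality so does replacing `(1 - ξ) / (1 - q)` by a
multiple of `(1 - q) ^ T`. Also `T ≤ (ξ / 40) N`, so lengthening the interval by `T` costs at most
`ξ / 40`. Relative to `q N`, or to `q (1 - q) ^ T N` for `z⁺` and `x'`, the losses are then at most
`3ξ/20` for `y'` and `11ξ/20` for `(1 - ξ/2) x'`, and at least `17ξ/20` for `z`, `33ξ/40` for `z⁺`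
and `37ξ/60` for `z±`.
-/

section OrderedRing

variable {R : Type*} [CommRing R] [LinearOrder R] [IsStrictOrderedRing R]

theorem one_sub_add_le_one_sub_mul_one_sub {a b : R} (ha : 0 ≤ a) (hb : 0 ≤ b) :
    1 - (a + b) ≤ (1 - a) * (1 - b) := by
  linarith [mul_nonneg ha hb]

theorem one_sub_add_mul_le_one_sub_mul {a b m x : R} (ha : 0 ≤ a) (ha1 : a ≤ 1) (hb : 0 ≤ b)
    (hm : 0 ≤ m) (hx : (1 - b) * m ≤ x) : (1 - (a + b)) * m ≤ (1 - a) * x :=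
  calc
    (1 - (a + b)) * m ≤ (1 - a) * (1 - b) * m := by
      gcongr
      exact one_sub_add_le_one_sub_mul_one_sub ha hb
    _ = (1 - a) * ((1 - b) * m) := mul_assoc ..
    _ ≤ (1 - a) * x := mul_le_mul_of_nonneg_left hx (sub_nonneg.2 ha1)

theorem one_sub_add_mul_le_one_sub_mul_mul_one_sub {a b p q n : R} (ha : 0 ≤ a) (ha1 : a ≤ 1)
    (hb : 0 ≤ b) (hp : p ≤ b) (hqn : 0 ≤ q * n) :
    (1 - (a + b)) * (q * n) ≤ (1 - a) * (q * (1 - p)) * n :=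
  calc
    (1 - (a + b)) * (q * n) ≤ (1 - a) * ((1 - p) * (q * n)) :=
      one_sub_add_mul_le_one_sub_mul ha ha1 hb hqn (by gcongr)
    _ = (1 - a) * (q * (1 - p)) * n := by ring

theorem one_sub_mul_lt_one_sub_mul {a b m : R} (hab : a < b) (hm : 0 < m) :
    (1 - b) * m < (1 - a) * m :=
  mul_lt_mul_of_pos_right (sub_lt_sub_left hab 1) hm

theorem one_sub_mul_mul_add_lt {a b c w n t : R} (ha : 0 ≤ a) (hw : 0 < w) (hn : 0 < n)
    (ht : 0 ≤ t) (htn : t ≤ b * n) (hc : c < a - b) :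
    (1 - a) * (w * (n + t)) < (1 - c) * (w * n) := by
  have lengthen : (1 - a) * (n + t) ≤ (1 - (a - b)) * n := by linarith [mul_nonneg ha ht]
  calc
    (1 - a) * (w * (n + t)) = w * ((1 - a) * (n + t)) := mul_left_comm ..
    _ ≤ w * ((1 - (a - b)) * n) := mul_le_mul_of_nonneg_left lengthen hw.le
    _ = (1 - (a - b)) * (w * n) := mul_left_comm ..
    _ < (1 - c) * (w * n) := one_sub_mul_lt_one_sub_mul hc (mul_pos hw hn)

end OrderedRing

section OrderedField

variable {K : Type*} [Field K] [LinearOrder K] [IsStrictOrderedRing K]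

theorem le_div_mul_of_mul_le {q t c k n : K} (hq : 0 < q) (hc : 0 ≤ c) (hk : 0 < k)
    (hqt : q * t ≤ c) (hn : k / q ≤ n) : t ≤ c / k * n :=
  calc
    t ≤ c / q := (le_div_iff₀' hq).2 hqt
    _ = c / k * (k / q) := by field_simp
    _ ≤ c / k * n := by gcongr

theorem one_sub_two_mul_div_one_sub_mem_Ioc {β : K} (hβ0 : 0 ≤ β) (hβ : β < 1 / 2) :
    (1 - 2 * β) / (1 - β) ∈ Set.Ioc 0 1 := by
  have hβ' : 0 < 1 - β := by linarith
  exact ⟨div_pos (by linarith) hβ', (div_le_one hβ').2 (by linarith)⟩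

theorem one_sub_div_one_sub_le_mul_pow {ξ δ q : K} {T : ℕ} (hδ : 0 ≤ δ) (hδξ : δ ≤ ξ)
    (hξ : ξ ≤ 1) (hq : q < 1) (hqT : (T + 1) * q ≤ δ) :
    (1 - ξ) / (1 - q) ≤ (1 - (ξ - δ)) * (1 - q) ^ T := by
  have bernoulli : 1 - δ ≤ (1 - q) ^ (T + 1) := by
    have h := one_add_mul_le_pow (show -2 ≤ -q by linarith) (T + 1)
    rw [← sub_eq_add_neg] at h
    push_cast at h
    linarith
  rw [div_le_iff₀ (sub_pos.2 hq)]
  calc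
    1 - ξ = 1 - ((ξ - δ) + δ) := by ring
    _ ≤ (1 - (ξ - δ)) * (1 - δ) := one_sub_add_le_one_sub_mul_one_sub (sub_nonneg.2 hδξ) hδ
    _ ≤ (1 - (ξ - δ)) * (1 - q) ^ (T + 1) := by
      gcongr
      linarith
    _ = (1 - (ξ - δ)) * (1 - q) ^ T * (1 - q) := by ring

theorem one_sub_mul_div_add_mul_pow_le {ξ δ ε q m : K} {T : ℕ} (hδ : 0 ≤ δ) (hδξ : δ ≤ ξ)
    (hξ : ξ ≤ 1) (hq : q < 1) (hqT : (T + 1) * q ≤ δ) (hm : 0 ≤ q * m) :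
    (1 - ξ) * (q / (1 - q)) * m + ε * (q * (1 - q) ^ T) * m ≤
      (1 - (ξ - δ - ε)) * (q * (1 - q) ^ T * m) :=
  calc
    _ = ((1 - ξ) / (1 - q) + ε * (1 - q) ^ T) * (q * m) := by ring
    _ ≤ ((1 - (ξ - δ)) * (1 - q) ^ T + ε * (1 - q) ^ T) * (q * m) := by
      gcongr
      exact one_sub_div_one_sub_le_mul_pow hδ hδξ hξ hq hqT
    _ = _ := by ring

theorem one_sub_mul_div_add_mul_le {ξ δ ε q m : K} (hδ : 0 ≤ δ) (hδξ : δ ≤ ξ) (hξ : ξ ≤ 1)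
    (hq : q < 1) (hqδ : q ≤ δ) (hm : 0 ≤ q * m) :
    (1 - ξ) * (q / (1 - q)) * m + ε * q * m ≤ (1 - (ξ - δ - ε)) * (q * m) := by
  simpa using one_sub_mul_div_add_mul_pow_le (T := 0) (ε := ε) hδ hδξ hξ hq (by simpa) hm

end OrderedField

/-- deterministic content of the Typical Properties Lemma for the
bounded-delay model: Let `β ∈ [0,1/2)`, `ξ = (1-2β)/(1-β)`, `T ≥ 1` an integer,
`q ∈ (0,1)` with `q ≤ ξ/(20T)`, and `N > 2/q` a real.  Suppose reals
`x', y', z, z⁺, z±` satisfy the listed bounds.  Then (i) `y' > (1-ξ/3)qN`;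
(ii) `z < (1-2ξ/3)qN`; (iii) `z⁺ < (1-ξ/2)x'`; (iv) `z± < y'`. -/
theorem stmt_18 (β : ℝ) (hβ0 : 0 ≤ β) (hβhalf : β < 1 / 2)
    (ξ : ℝ) (hξ : ξ = (1 - 2 * β) / (1 - β))
    (T : ℕ) (hT : 1 ≤ T)
    (q : ℝ) (hq0 : 0 < q) (hq1 : q < 1) (hq20T : q ≤ ξ / (20 * T))
    (N : ℝ) (hN : N > 2 / q)
    (x' y' z zplus zpm : ℝ)
    (hx' : x' ≥ (1 - ξ / 20) * (q * (1 - q) ^ T) * N)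
    (hy' : y' ≥ (1 - ξ / 20) * (q * (1 - (2 * (T : ℝ) - 1) * q)) * N)
    (hz : z ≤ (1 - ξ) * (q / (1 - q)) * N + (ξ / 20) * q * N)
    (hzplus : zplus ≤ (1 - ξ) * (q / (1 - q)) * (N + T) + (ξ / 20) * (q * (1 - q) ^ T) * (N + T))
    (hzpm : zpm ≤ (1 - 2 * ξ / 3) * q * (N + 2 * T)) :
    y' > (1 - ξ / 3) * q * N ∧
    z < (1 - 2 * ξ / 3) * q * N ∧
    zplus < (1 - ξ / 2) * x' ∧
    zpm < y' := by
  obtain ⟨hξ0, hξ1⟩ : ξ ∈ Set.Ioc 0 1 := hξ ▸ one_sub_two_mul_div_one_sub_mem_Ioc hβ0 hβhalf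
  have hqT : q * T ≤ ξ / 20 := by rw [le_div_iff₀ (by positivity)] at hq20T; linarith
  have hq : q ≤ q * T := le_mul_of_one_le_right hq0.le (mod_cast hT)
  have hTN : T ≤ ξ / 20 / 2 * N := le_div_mul_of_mul_le hq0 (by positivity) two_pos hqT hN.le
  have hN0 : 0 < N := lt_trans (by positivity) hN
  have hqN : 0 < q * N := mul_pos hq0 hN0
  have hw : 0 < q * (1 - q) ^ T := mul_pos hq0 (pow_pos (sub_pos.2 hq1) T)
  have hy : (1 - (ξ / 20 + ξ / 10)) * (q * N) ≤ y' := hy'.le.trans' <|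
    one_sub_add_mul_le_one_sub_mul_mul_one_sub (by positivity) (by linarith) (by positivity)
      (by linarith) hqN.le
  rw [mul_assoc] at hx' hzpm
  rw [mul_assoc _ q, mul_assoc _ q]
  refine ⟨(one_sub_mul_lt_one_sub_mul (by linarith) hqN).trans_le hy, ?_, ?_, ?_⟩
  · have hz_le : z ≤ (1 - (ξ - ξ / 10 - ξ / 20)) * (q * N) := hz.trans <|
      one_sub_mul_div_add_mul_le (by positivity) (by linarith) hξ1 hq1 (by linarith) hqN.le
    exact hz_le.trans_lt (one_sub_mul_lt_one_sub_mul (by linarith) hqN)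
  · calc
      zplus ≤ (1 - (ξ - ξ / 10 - ξ / 20)) * (q * (1 - q) ^ T * (N + T)) := hzplus.trans <|
        one_sub_mul_div_add_mul_pow_le (by positivity) (by linarith) hξ1 hq1 (by linarith)
          (by positivity)
      _ < (1 - (ξ / 2 + ξ / 20)) * (q * (1 - q) ^ T * N) :=
        one_sub_mul_mul_add_lt (by linarith) hw hN0 T.cast_nonneg hTN (by linarith)
      _ ≤ (1 - ξ / 2) * x' := one_sub_add_mul_le_one_sub_mul (by positivity) (by linarith)
        (by positivity) (by positivity) hx'
  · exact hzpm.trans_lt <| (one_sub_mul_mul_add_lt (b := ξ / 20) (by positivity) hq0 hN0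
      (by positivity) (by linarith) (by linarith)).trans_le hy
end
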